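/- Let X be a Tychonoff space and suppose there exists a sequence (K_n)_{n∈ℕ} of non-empty compact subsets of X such that for every n the set K_n contains two disjoint subspaces each homeomorphic to K_{n+1}. Then there exists a linear subspace Z of C_p(X) such that the quotient space C_p(X)/Z (with the quotient topology) is metrizable and infinite-dimensional. -/

import Mathlib

open Topology Filter

/-- The space `C_p(X)` of continuous real functions with the topology of pointwise
convergence, realized as a submodule of `X → ℝ` (with the subspace topology
inherited from the product topology). -/
def Cp (X : Type*) [TopologicalSpace X] : Submodule ℝ (X → ℝ) where
  carrier := {f | Continuous f}
  add_mem' hf hg := hf.add hg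
  zero_mem' := continuous_const
  smul_mem' _c _f hf := continuous_const.mul hf

/-- A topological space is pseudocompact if every continuous real-valued function
on it is bounded. -/
def Pseudocompact (X : Type*) [TopologicalSpace X] : Prop :=
  ∀ f : X → ℝ, Continuous f → ∃ C, ∀ x, |f x| ≤ C

/-!
Iterating the copies gives, for every `n`, disjoint copies of the `n`-th compact set in `X` indexed
by the words of length `n` over a finite alphabet, together with a marked point of the `n`-th set
lying outside the copies of the next one. The `n`-th coordinate of `T : C_p(X) → ℝ^ℕ` averages a
function over the marked points of all words of length `n`.

To see that `T` is open onto its range, let `F ⊆ X` be finite. For large `N` there are more than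
`|F|` words of length `N`, so some word `w` has a copy missing `F`. Given `f`, move the total mass
of `f` on the copies of level `N` to the copy of `w`, put `0` on the other ones and the constant
`T f n` at the marked points of each level `n < N`. Any continuous extension `g` satisfies
`T g = T f`, since averages at levels above `N` only depend on those at level `N`, and `g` is small
on `F` as soon as the first `N` coordinates of `T f` are. Hence `C_p(X) / ker T` embeds
into `ℝ^ℕ`.
-/

open Function Set
open scoped BigOperators

theorem isStrictMap_of_nhds_zero {R E F : Type*} [Ring R]
    [AddCommGroup E] [Module R E] [TopologicalSpace E] [IsTopologicalAddGroup E]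
    [AddCommGroup F] [Module R F] [TopologicalSpace F] [IsTopologicalAddGroup F]
    (T : E →L[R] F)
    (hT : ∀ U ∈ 𝓝 (0 : E), ∃ V ∈ 𝓝 (0 : F), ∀ f, T f ∈ V → ∃ g ∈ U, T g = T f) :
    IsStrictMap T := by
  refine T.toLinearMap.isStrictMap_iff_isOpenQuotientMap_rangeRestrict.2
    ⟨T.toLinearMap.surjective_rangeRestrict, T.continuous.subtype_mk _, ?_⟩
  refine IsTopologicalAddGroup.isOpenMap_iff_nhds_zero.2 fun W hW ↦ ?_
  obtain ⟨V, hV, hVW⟩ := hT _ hW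
  rw [nhds_subtype]
  refine mem_of_superset (preimage_mem_comap hV) ?_
  rintro ⟨_, f, rfl⟩ hf
  obtain ⟨g, hg, hgf⟩ := hVW f hf
  have hgf' : T.toLinearMap.rangeRestrict g = ⟨T f, f, rfl⟩ := Subtype.ext hgf
  exact hgf' ▸ hg

theorem not_finiteDimensional_quotient_ker_of_forall_single {𝕜 E κ : Type*} [DivisionRing 𝕜]
    [AddCommGroup E] [Module 𝕜 E] [Infinite κ] [DecidableEq κ] (T : E →ₗ[𝕜] κ → 𝕜)
    (hT : ∀ k, ∃ f, T f = Pi.single k 1) :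
    ¬ FiniteDimensional 𝕜 (E ⧸ T.ker) := by
  intro _
  choose f hf using hT
  have hindep : LinearIndependent 𝕜 fun k ↦ T.ker.mkQ (f k) := by
    refine LinearIndependent.of_comp (T.ker.liftQ T le_rfl) ?_
    have hcomp : (T.ker.liftQ T le_rfl) ∘ (fun k ↦ T.ker.mkQ (f k)) = fun k ↦ Pi.single k 1 :=
      funext hf
    exact hcomp ▸ Pi.linearIndependent_single_one κ 𝕜
  exact not_finite_iff_infinite.2 ‹_› hindep.finite

section Cp

variable {X : Type*} [TopologicalSpace X]

theorem Cp.continuous_eval (p : X) : Continuous fun f : Cp X ↦ f.1 p :=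
  (continuous_apply p).comp continuous_subtype_val

theorem Cp.hasBasis_nhds_zero :
    (𝓝 (0 : Cp X)).HasBasis (fun Fε : Set X × ℝ ↦ Fε.1.Finite ∧ 0 < Fε.2)
      fun Fε ↦ {g | ∀ p ∈ Fε.1, |g.1 p| < Fε.2} := by
  have hbasis : (𝓝 (0 : X → ℝ)).HasBasis _ _ :=
    nhds_pi (A := fun _ : X ↦ ℝ) ▸ (Metric.nhds_basis_ball (x := (0 : ℝ))).pi_self
  rw [nhds_subtype]
  refine (hbasis.comap _).congr (fun _ ↦ Iff.rfl) fun Fε _ ↦ ?_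
  ext g
  simp [Set.mem_pi]

theorem Cp.isStrictMap_of_forall_finite {κ : Type*} (T : Cp X →L[ℝ] κ → ℝ)
    (hT : ∀ F : Set X, F.Finite → ∃ S : Set κ, S.Finite ∧ ∀ f ε, 0 < ε →
      (∀ k ∈ S, |T f k| < ε) → ∃ g, T g = T f ∧ ∀ p ∈ F, |g.1 p| < ε) :
    IsStrictMap T := by
  refine isStrictMap_of_nhds_zero T fun U hU ↦ ?_
  obtain ⟨⟨F, ε⟩, ⟨hF, hε⟩, hFU⟩ := Cp.hasBasis_nhds_zero.mem_iff.1 hU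
  obtain ⟨S, hS, hST⟩ := hT F hF
  refine ⟨S.pi fun _ ↦ Metric.ball 0 ε,
    set_pi_mem_nhds hS fun _ _ ↦ Metric.ball_mem_nhds _ hε, fun f hf ↦ ?_⟩
  obtain ⟨g, hgf, hg⟩ := hST f ε hε fun k hk ↦ by simpa using hf k hk
  exact ⟨g, hFU hg, hgf⟩

end Cp

section Extension

variable {X Y : Type*} [TopologicalSpace X] [T35Space X] [TopologicalSpace Y] [CompactSpace Y]
  {j : C(Y, X)}

theorem exists_continuousMap_comp_eq_of_injective (hj : Injective j) (u : C(Y, ℝ)) :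
    ∃ g : C(X, ℝ), g.comp j = u := by
  have hclosed : IsClosedEmbedding (stoneCechUnit ∘ j) :=
    (continuous_stoneCechUnit.comp j.continuous).isClosedEmbedding
      (injective_stoneCechUnit_of_t35Space.comp hj)
  obtain ⟨g, hg⟩ := u.exists_extension hclosed
  exact ⟨g.comp ⟨stoneCechUnit, continuous_stoneCechUnit⟩, hg⟩

theorem exists_continuousMap_comp_eq_and_eqOn (hj : Injective j) (u : C(Y, ℝ)) {A : Set X}
    (hA : A.Finite) (hjA : Disjoint (range j) A) (v : X → ℝ) :
    ∃ g : C(X, ℝ), g.comp j = u ∧ EqOn g v A := by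
  have : Finite A := hA
  let jA : C(Y ⊕ A, X) := ⟨Sum.elim j (↑), j.continuous.sumElim continuous_subtype_val⟩
  have hjA_inj : Injective jA := hj.sumElim Subtype.val_injective fun y p h ↦
    disjoint_left.1 hjA (mem_range_self y) (h ▸ p.2)
  obtain ⟨g, hg⟩ := exists_continuousMap_comp_eq_of_injective hjA_inj
    ⟨Sum.elim u fun p ↦ v p, u.continuous.sumElim continuous_of_discreteTopology⟩
  exact ⟨g, ContinuousMap.ext fun y ↦ DFunLike.congr_fun hg (Sum.inl y),
    fun p hp ↦ DFunLike.congr_fun hg (Sum.inr (⟨p, hp⟩ : A))⟩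

end Extension

theorem exists_injective_bool_prod {Y Z : Type*} [TopologicalSpace Y] [TopologicalSpace Z]
    {e₀ e₁ : Z → Y} (h₀ : Continuous e₀) (h₁ : Continuous e₁)
    (hi₀ : Injective e₀) (hi₁ : Injective e₁) (hdisj : Disjoint (range e₀) (range e₁)) :
    ∃ c : C(Bool × Z, Y), Injective c := by
  have hne (z z' : Z) : e₀ z ≠ e₁ z' := fun h ↦
    disjoint_left.1 hdisj (mem_range_self z) (h ▸ mem_range_self z')
  refine ⟨⟨fun q ↦ bif q.1 then e₁ q.2 else e₀ q.2, ?_⟩, ?_⟩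
  · exact continuous_prod_of_discrete_left.2 <| Bool.forall_bool.2 ⟨h₀, h₁⟩
  · rintro ⟨_ | _, z⟩ ⟨_ | _, z'⟩ h
    · exact congrArg _ (hi₀ h)
    · exact absurd h (hne z z')
    · exact absurd h.symm (hne z' z)
    · exact congrArg _ (hi₁ h)

/-- A tree of disjoint copies of the spaces `Y n` inside `X`: the space `Y n` contains disjoint
copies of `Y (n + 1)` indexed by the alphabet `ι`, and a marked point outside all of them. The
copies are encoded by a single injective map from `ι × Y (n + 1)`. -/
structure BranchingSystem (ι X : Type*) (Y : ℕ → Type*) [TopologicalSpace ι] [TopologicalSpace X]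
    [∀ n, TopologicalSpace (Y n)] where
  root : C(Y 0, X)
  root_injective : Injective root
  branch : ∀ n, C(ι × Y (n + 1), Y n)
  branch_injective : ∀ n, Injective (branch n)
  mark : ∀ n, Y n
  mark_notMem : ∀ n, mark n ∉ range (branch n)

namespace BranchingSystem

variable {ι X : Type*} {Y : ℕ → Type*} [TopologicalSpace ι] [TopologicalSpace X]
  [∀ n, TopologicalSpace (Y n)]

/-- The branching system of a sequence of copies without marked points. Spending two levels per step
of the tree leaves room for a marked point: only the copy with letter `b₀` is branched further, and
the mark is taken in the copy with letter `b₁`. -/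
noncomputable def ofInjective [∀ n, Nonempty (Y n)] {b₀ b₁ : ι} (hb : b₀ ≠ b₁) (root : C(Y 0, X))
    (root_injective : Injective root) (c : ∀ n, C(ι × Y (n + 1), Y n))
    (c_injective : ∀ n, Injective (c n)) : BranchingSystem ι X fun n ↦ Y (2 * n) where
  root := root
  root_injective := root_injective
  branch n := (c (2 * n)).comp ⟨fun q ↦ (b₀, c (2 * n + 1) q), by fun_prop⟩
  branch_injective n := (c_injective _).comp ((Prod.mk_right_injective b₀).comp (c_injective _))
  mark n := c (2 * n) (b₁, Classical.arbitrary _)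
  mark_notMem n := by
    rintro ⟨q, hq⟩
    exact hb (congrArg Prod.fst (c_injective _ hq))

variable (B : BranchingSystem ι X Y)

/-- The copies of `Y n` at level `n` of the tree, indexed by the words of length `n`. The last
letter of a word is the innermost branching. -/
def copies : ∀ n, C((Fin n → ι) × Y n, X)
  | 0 => B.root.comp .snd
  | n + 1 => (copies n).comp
      ⟨fun q ↦ (Fin.init q.1, B.branch n (q.1 (Fin.last n), q.2)), by fun_prop⟩

theorem copies_succ (n : ℕ) (w : Fin (n + 1) → ι) (y : Y (n + 1)) :
    B.copies (n + 1) (w, y) = B.copies n (Fin.init w, B.branch n (w (Fin.last n), y)) :=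
  rfl

theorem copies_injective (n : ℕ) : Injective (B.copies n) := by
  induction n with
  | zero =>
    rintro ⟨w, y⟩ ⟨w', y'⟩ h
    exact Prod.ext (Subsingleton.elim w w') (B.root_injective h)
  | succ n ih =>
    rintro ⟨w, y⟩ ⟨w', y'⟩ h
    obtain ⟨hinit, hbranch⟩ := Prod.ext_iff.1 (ih h)
    obtain ⟨hlast, hy⟩ := Prod.ext_iff.1 (B.branch_injective n hbranch)
    refine Prod.ext ?_ hy
    rw [← Fin.snoc_init_self w, ← Fin.snoc_init_self w']
    exact congrArg₂ (Fin.snoc (α := fun _ ↦ ι)) hinit hlast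

theorem range_copies_antitone : Antitone fun n ↦ range (B.copies n) := by
  refine antitone_nat_of_succ_le fun n ↦ ?_
  rintro _ ⟨⟨w, y⟩, rfl⟩
  exact mem_range_self _

/-- The marked points of all the copies, indexed by words of all lengths. -/
def marks (q : Σ n, Fin n → ι) : X :=
  B.copies q.1 (q.2, B.mark q.1)

theorem marks_notMem_range_copies {m n : ℕ} (hmn : m < n) (w : Fin m → ι) :
    B.marks ⟨m, w⟩ ∉ range (B.copies n) := by
  intro h
  obtain ⟨⟨v, y⟩, hvy⟩ := B.range_copies_antitone hmn h
  exact B.mark_notMem m ⟨_, congrArg Prod.snd (B.copies_injective m hvy)⟩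

theorem marks_mem_range_copies {m n : ℕ} (hmn : m ≤ n) (w : Fin n → ι) :
    B.marks ⟨n, w⟩ ∈ range (B.copies m) :=
  B.range_copies_antitone hmn (mem_range_self _)

theorem marks_injective : Injective B.marks := by
  rintro ⟨m, w⟩ ⟨n, v⟩ h
  obtain hmn | rfl | hnm := lt_trichotomy m n
  · exact absurd (h ▸ mem_range_self _) (B.marks_notMem_range_copies hmn w)
  · obtain rfl := congrArg Prod.fst (B.copies_injective m h)
    rfl
  · exact absurd (h ▸ mem_range_self _) (B.marks_notMem_range_copies hnm v)

theorem exists_word_forall_copies_notMem [Finite ι] [Nontrivial ι] {F : Set X} (hF : F.Finite) :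
    ∃ N, ∃ w : Fin N → ι, ∀ y, B.copies N (w, y) ∉ F := by
  refine ⟨F.ncard, ?_⟩
  by_contra! hmeet
  choose y hy using hmeet
  have : Finite F := hF
  let toF : (Fin F.ncard → ι) → F := fun w ↦ ⟨B.copies _ (w, y w), hy w⟩
  have toF_injective : Injective toF := fun w w' h ↦
    congrArg Prod.fst (B.copies_injective _ (congrArg Subtype.val h))
  have hcard : Nat.card ι ^ F.ncard ≤ F.ncard := by
    simpa [Nat.card_fun, Nat.card_coe_set_eq] using Nat.card_le_card_of_injective _ toF_injective
  exact hcard.not_gt (Nat.lt_pow_self Finite.one_lt_card)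

section Average

variable [Fintype ι]

/-- The average of `f` over the copies of a point `y` at level `n`. -/
noncomputable def levelAverage (f : X → ℝ) (n : ℕ) (y : Y n) : ℝ :=
  𝔼 w, f (B.copies n (w, y))

theorem levelAverage_succ (f : X → ℝ) (n : ℕ) (y : Y (n + 1)) :
    B.levelAverage f (n + 1) y = 𝔼 b, B.levelAverage f n (B.branch n (b, y)) := by
  simp only [levelAverage, copies_succ]
  rw [← Finset.expect_product', Finset.univ_product_univ]
  exact Fintype.expect_equiv (Fin.snocEquiv fun _ ↦ ι).symm _ _ fun w ↦ rfl

theorem levelAverage_eq_of_le {f g : X → ℝ} {m n : ℕ} (hmn : m ≤ n)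
    (h : B.levelAverage f m = B.levelAverage g m) : B.levelAverage f n = B.levelAverage g n := by
  induction n, hmn using Nat.le_induction with
  | base => exact h
  | succ n _ ih =>
    funext y
    simp only [levelAverage_succ, ih]

/-- The map `C_p(X) → ℝ^ℕ` whose `n`-th coordinate averages a function over the marked points
of level `n`. -/
noncomputable def averageMap : Cp X →L[ℝ] ℕ → ℝ where
  toFun f n := B.levelAverage f n (B.mark n)
  map_add' f g := by
    ext n
    exact Finset.expect_add_distrib ..
  map_smul' r f := by
    ext n
    exact (Finset.mul_expect ..).symm
  cont := by
    simp only [levelAverage, Fintype.expect_eq_sum_div_card]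
    exact continuous_pi fun n ↦
      (continuous_finsetSum _ fun w _ ↦ Cp.continuous_eval _).div_const _

theorem averageMap_apply (f : Cp X) (n : ℕ) :
    B.averageMap f n = B.levelAverage f n (B.mark n) :=
  rfl

theorem averageMap_eq_of_forall_marks [Nonempty ι] {f : Cp X} {n : ℕ} {r : ℝ}
    (h : ∀ w, f.1 (B.marks ⟨n, w⟩) = r) : B.averageMap f n = r :=
  (Finset.expect_congr rfl fun w _ ↦ h w).trans (Fintype.expect_const r)

variable [DiscreteTopology ι] [T35Space X] [∀ n, CompactSpace (Y n)]

theorem exists_concentrated_extension {N : ℕ} (w : Fin N → ι) (f : Cp X) {A : Set X}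
    (hA : A.Finite) (hAN : Disjoint (range (B.copies N)) A) (v : X → ℝ) :
    ∃ g : Cp X, B.levelAverage g N = B.levelAverage f N ∧
      (∀ w' ≠ w, ∀ y, g.1 (B.copies N (w', y)) = 0) ∧ EqOn g.1 v A := by
  classical
  let mass : C((Fin N → ι) × Y N, ℝ) :=
    ⟨fun q ↦ if q.1 = w then ∑ t, f.1 (B.copies N (t, q.2)) else 0, by
      refine continuous_prod_of_discrete_left.2 fun t ↦ ?_
      have : Continuous f.1 := f.2
      by_cases ht : t = w <;> simp only [ht, if_true, if_false] <;> fun_prop⟩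
  obtain ⟨g, hg, hgv⟩ :=
    exists_continuousMap_comp_eq_and_eqOn (B.copies_injective N) mass hA hAN v
  have hg_copies (t y) :
      g (B.copies N (t, y)) = if t = w then ∑ t, f.1 (B.copies N (t, y)) else 0 :=
    DFunLike.congr_fun hg (t, y)
  refine ⟨⟨g, g.continuous⟩, ?_, fun w' hw' y ↦ (hg_copies w' y).trans (if_neg hw'), hgv⟩
  funext y
  simp only [levelAverage, Fintype.expect_eq_sum_div_card, hg_copies, Finset.sum_ite_eq',
    Finset.mem_univ, if_true]

theorem exists_averageMap_eq [Nonempty ι] {F : Set X} (hF : F.Finite) {N : ℕ} {w : Fin N → ι}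
    (hw : ∀ y, B.copies N (w, y) ∉ F) (f : Cp X) {c : ℕ → ℝ}
    (hc : ∀ n, N ≤ n → c n = B.averageMap f n) :
    ∃ g, B.averageMap g = c ∧ ∀ p ∈ F, g.1 p = 0 ∨ ∃ n < N, g.1 p = c n := by
  let v : X → ℝ := extend B.marks (fun q ↦ c q.1) 0
  let M : Set X := ⋃ n < N, range fun t : Fin n → ι ↦ B.marks ⟨n, t⟩
  have hM : M.Finite := (finite_Iio N).biUnion fun n _ ↦ finite_range _
  have hMN : Disjoint (range (B.copies N)) M := by
    refine disjoint_iUnion₂_right.2 fun n hn ↦ disjoint_right.2 ?_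
    rintro _ ⟨t, rfl⟩
    exact B.marks_notMem_range_copies hn t
  obtain ⟨g, hg_avg, hg_zero, hgv⟩ := B.exists_concentrated_extension w f
    (A := (F \ range (B.copies N)) ∪ M) (hF.sdiff.union hM)
    (disjoint_sdiff_right.union_right hMN) v
  refine ⟨g, funext fun n ↦ ?_, fun p hp ↦ ?_⟩
  · obtain hn | hn := lt_or_ge n N
    · refine B.averageMap_eq_of_forall_marks fun t ↦ ?_
      have ht : B.marks ⟨n, t⟩ ∈ M := mem_biUnion hn (mem_range_self t)
      rw [hgv (Or.inr ht)]
      exact B.marks_injective.extend_apply ..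
    · rw [hc n hn, averageMap_apply, averageMap_apply, B.levelAverage_eq_of_le hn hg_avg]
  · by_cases hpN : p ∈ range (B.copies N)
    · obtain ⟨⟨t, y⟩, rfl⟩ := hpN
      exact Or.inl (hg_zero t (by rintro rfl; exact hw y hp) y)
    · rw [hgv (Or.inl ⟨hp, hpN⟩)]
      by_cases hpm : p ∈ range B.marks
      · obtain ⟨⟨n, t⟩, rfl⟩ := hpm
        have hn : n < N := lt_of_not_ge fun hNn ↦ hpN (B.marks_mem_range_copies hNn t)
        exact Or.inr ⟨n, hn, B.marks_injective.extend_apply ..⟩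
      · exact Or.inl (extend_apply' _ _ _ hpm)

theorem isStrictMap_averageMap [Nontrivial ι] : IsStrictMap B.averageMap := by
  refine Cp.isStrictMap_of_forall_finite _ fun F hF ↦ ?_
  obtain ⟨N, w, hw⟩ := B.exists_word_forall_copies_notMem hF
  refine ⟨Iio N, finite_Iio N, fun f ε hε hf ↦ ?_⟩
  obtain ⟨g, hgf, hg⟩ := B.exists_averageMap_eq hF hw f (c := B.averageMap f) fun _ _ ↦ rfl
  refine ⟨g, hgf, fun p hp ↦ ?_⟩
  obtain h | ⟨n, hn, h⟩ := hg p hp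
  · simpa [h] using hε
  · exact h ▸ hf n hn

theorem metrizableSpace_quotient_ker [Nontrivial ι] :
    TopologicalSpace.MetrizableSpace (Cp X ⧸ B.averageMap.ker) :=
  (LinearMap.isStrictMap_iff_isEmbedding_liftQ_ker.1 B.isStrictMap_averageMap).metrizableSpace

theorem exists_averageMap_eq_single [Nonempty ι] (k : ℕ) :
    ∃ f, B.averageMap f = Pi.single k 1 := by
  obtain ⟨g, hg, -⟩ := B.exists_averageMap_eq finite_empty (N := k + 1)
    (w := Classical.arbitrary _) (fun _ ↦ notMem_empty _) 0 (c := Pi.single k 1) fun n hn ↦ by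
      rw [map_zero, Pi.zero_apply, Pi.single_eq_of_ne (by omega)]
  exact ⟨g, hg⟩

theorem not_finiteDimensional_quotient_ker [Nonempty ι] :
    ¬ FiniteDimensional ℝ (Cp X ⧸ B.averageMap.ker) :=
  not_finiteDimensional_quotient_ker_of_forall_single _ B.exists_averageMap_eq_single

end Average

end BranchingSystem

/-- **Theorem 8 of the paper.** Let `X` be a Tychonoff space admitting a sequence `(Kₙ)`
of nonempty compact subsets such that each `Kₙ` contains two disjoint topological copies
of `Kₙ₊₁`. Then `C_p(X)` has an infinite-dimensional metrizable quotient (by a linear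
subspace, with the quotient topology). -/
theorem cp_has_metrizable_quotient_of_compact_copies
    (X : Type*) [TopologicalSpace X] [T2Space X] [CompletelyRegularSpace X]
    (K : ℕ → Set X)
    (hne : ∀ n, (K n).Nonempty)
    (hcomp : ∀ n, IsCompact (K n))
    (hcopies : ∀ n, ∃ e₀ e₁ : K (n + 1) → K n,
      Topology.IsEmbedding e₀ ∧ Topology.IsEmbedding e₁ ∧
      Disjoint (Set.range e₀) (Set.range e₁)) :
    ∃ Z : Submodule ℝ (Cp X),
      TopologicalSpace.MetrizableSpace (Cp X ⧸ Z) ∧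
      ¬ FiniteDimensional ℝ (Cp X ⧸ Z) := by
  have (n : ℕ) : ∃ c : C(Bool × K (n + 1), K n), Injective c := by
    obtain ⟨e₀, e₁, h₀, h₁, hdisj⟩ := hcopies n
    exact exists_injective_bool_prod h₀.continuous h₁.continuous h₀.injective h₁.injective hdisj
  choose c hc using this
  have : T35Space X := {}
  have (n : ℕ) : CompactSpace (K n) := isCompact_iff_compactSpace.1 (hcomp n)
  have (n : ℕ) : Nonempty (K n) := (hne n).to_subtype
  let B := BranchingSystem.ofInjective (Y := fun n ↦ K n) Bool.false_ne_true
    ⟨Subtype.val, continuous_subtype_val⟩ Subtype.val_injective c hc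
  exact ⟨B.averageMap.ker, B.metrizableSpace_quotient_ker, B.not_finiteDimensional_quotient_ker⟩
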